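/- arXiv:2305.11296 — 7 statements merged into one kernel-verified Lean document; each statement's English description precedes it below -/
import Mathlib

section
/- Participatory budgeting with unit-cost projects and singleton groups is not strategyproof when the funding constraints are not 1-laminar: for every finite project set P and subsets P_{l1}, P_{l2} ⊆ P with P_{l1} ∩ P_{l2} ≠ ∅, P_{l1} \ P_{l2} ≠ ∅, and P_{l2} \ P_{l1} ≠ ∅, there exist a budget B, minimum/maximum funding bounds on the labels, a number of voters n, truthful approval sets T_1, …, T_n, a voter i, a deviating report S_i', a valid outcome Q maximizing reported social welfare among valid outcomes under the truthful profile, and a valid outcome Q' maximizing reported social welfare among valid outcomes under the profile where i reports S_i' and others report truthfully, such that |Q' ∩ T_i| > |Q ∩ T_i|. -/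
/-!
Knapsack voting with unit-cost projects and singleton groups is not strategyproof
when the funding constraints are not 1-laminar.
-/

open Finset

/-- For every finite project set and every pair of label sets
`P₁, P₂` witnessing non-1-laminarity (`P₁ ∩ P₂ ≠ ∅`, `P₁ \ P₂ ≠ ∅`, `P₂ \ P₁ ≠ ∅`),
there are a budget, funding bounds, a profile of truthful approval sets, a voter `i`,
a deviating report, and social-welfare-maximizing valid outcomes `Q` (truthful profile)
and `Q'` (deviated profile) with `|Q' ∩ T i| > |Q ∩ T i|`. -/
theorem knapsack_not_strategyproof_of_non_laminar
    {α : Type*} [Fintype α] [DecidableEq α]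
    (P₁ P₂ : Finset α)
    (hint : (P₁ ∩ P₂).Nonempty)
    (hd₁ : (P₁ \ P₂).Nonempty)
    (hd₂ : (P₂ \ P₁).Nonempty) :
    ∃ (B : ℕ) (Bmin Bmax : Fin 2 → ℕ) (n : ℕ) (T : Fin n → Finset α) (i : Fin n)
      (S' : Finset α) (Q Q' : Finset α),
      0 < B ∧ (∀ l, Bmin l ≤ Bmax l) ∧
      (∀ j, (T j).card ≤ B) ∧ S'.card ≤ B ∧
      -- `Valid` outcomes for the (non-laminar) labelling `Pl 0 = P₁`, `Pl 1 = P₂`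
      (let Pl : Fin 2 → Finset α := ![P₁, P₂]
       let Valid : Finset α → Prop := fun R =>
         R.card ≤ B ∧ ∀ l, Bmin l ≤ (R ∩ Pl l).card ∧ (R ∩ Pl l).card ≤ Bmax l
       -- `Q` maximizes reported social welfare among valid outcomes, truthful profile
       (Valid Q ∧ ∀ R, Valid R →
          (∑ j, (R ∩ T j).card) ≤ ∑ j, (Q ∩ T j).card) ∧
       -- `Q'` maximizes reported social welfare among valid outcomes when `i` reports `S'`
       (Valid Q' ∧ ∀ R, Valid R →
          (∑ j, (R ∩ Function.update T i S' j).card) ≤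
            ∑ j, (Q' ∩ Function.update T i S' j).card) ∧
       -- profitable deviation for voter `i`
       (Q ∩ T i).card < (Q' ∩ T i).card) := by
  obtain ⟨c, hc⟩ := hint
  obtain ⟨a, ha⟩ := hd₁
  obtain ⟨b, hb⟩ := hd₂
  simp only [Finset.mem_inter, Finset.mem_sdiff] at hc ha hb
  obtain ⟨hc1, hc2⟩ := hc
  obtain ⟨ha1, ha2⟩ := ha
  obtain ⟨hb2, hb1⟩ := hb
  have hac : a ≠ c := fun h => ha2 (h ▸ hc2)
  have hbc : b ≠ c := fun h => hb1 (h ▸ hc1)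
  have hab : a ≠ b := fun h => hb1 (h ▸ ha1)
  have key : ∀ (R S : Finset α) (x y : α), x ≠ y → x ∈ S → y ∈ S → (R ∩ S).card ≤ 1 →
      ¬ (x ∈ R ∧ y ∈ R) := by
    rintro R S x y hxy hx hy hcard ⟨hxR, hyR⟩
    exact hxy (Finset.card_le_one.1 hcard x (by simp [hx, hxR]) y (by simp [hy, hyR]))
  have single : ∀ (R : Finset α) (x : α), (R ∩ {x}).card = if x ∈ R then 1 else 0 := by
    intro R x
    by_cases h : x ∈ R <;> simp [h]
  have pair : ∀ (R : Finset α), (R ∩ {a, b}).card =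
      (if a ∈ R then 1 else 0) + (if b ∈ R then 1 else 0) := by
    intro R
    by_cases h : a ∈ R <;> by_cases h' : b ∈ R <;>
      simp [h, h', Finset.inter_insert_of_mem, Finset.inter_insert_of_notMem, hab]
  -- Voter 0 approves `a`, two voters approve `c`; voter 0 additionally reports `b`.
  refine ⟨2, fun _ => 0, fun _ => 1, 3, ![{a}, {c}, {c}], 0, {a, b}, {c}, {a, b},
    by norm_num, by simp, ?_, Finset.card_le_two, ?_⟩
  · intro j
    fin_cases j <;> simp
  · have e1 : ({a, b} : Finset α) ∩ P₁ = {a} := by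
      ext x; simp only [Finset.mem_inter, Finset.mem_insert, Finset.mem_singleton]; grind
    have e2 : ({a, b} : Finset α) ∩ P₂ = {b} := by
      ext x; simp only [Finset.mem_inter, Finset.mem_insert, Finset.mem_singleton]; grind
    refine ⟨⟨⟨by simp, ?_⟩, ?_⟩, ⟨⟨Finset.card_le_two, ?_⟩, ?_⟩, ?_⟩
    · intro l
      fin_cases l <;> simp [hc1, hc2]
    · rintro R ⟨-, hR⟩
      have h0 := key R P₁ a c hac ha1 hc1 (hR 0).2
      simp only [Fin.sum_univ_three, Matrix.cons_val, single, Finset.mem_singleton]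
      grind
    · intro l
      fin_cases l <;> simp [e1, e2]
    · rintro R ⟨-, hR⟩
      have h0 := key R P₁ a c hac ha1 hc1 (hR 0).2
      have h1 := key R P₂ b c hbc hb2 hc2 (hR 1).2
      simp [Fin.sum_univ_three, Function.update, single, pair]
      grind
    · simp [single, hac]
end

section
/- PBPI is not strategyproof even with unit-cost projects: there exist a finite set of unit-cost projects partitioned into groups, a budget B, a number of voters n, a truthful vote profile (fund allocations, approval sets, and complementarity answers), a voter i, and a deviating vote for voter i, such that the social-welfare-maximizing outcome among sets of at most B projects is unique under the truthful profile and unique under the deviated profile, and voter i's utility (computed from i's truthful vote) at the deviated-profile optimum strictly exceeds voter i's utility at the truthful-profile optimum. -/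
/-!
PBPI is not strategyproof even with unit-cost projects (with complementarity
interactions allowed).
-/

open Finset

/-- The PBPI utility of a voter with fund allocations `f`, approval sets `s`, and
complementarity answers `t` from the outcome `Q` (unit-cost projects). -/
def pbpiUtil {α : Type*} [DecidableEq α] {r : ℕ} (f : Fin r → ℕ)
    (s : Fin r → Finset α) (t : Fin r → Bool) (Q : Finset α) : ℕ :=
  ∑ g, if t g then (if s g ⊆ Q then min (f g) ((Q ∩ s g).card) else 0)
    else min (f g) ((Q ∩ s g).card)

/-- There exist unit-cost projects partitioned into groups, a budget,
a truthful vote profile, a voter `i`, and a deviating vote for `i`, such that the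
social-welfare-maximizing outcome among sets of at most `B` projects is unique under
both profiles, and `i`'s truthful utility at the deviated-profile optimum strictly
exceeds `i`'s truthful utility at the truthful-profile optimum. -/
theorem pbpi_not_strategyproof :
    ∃ (m r n B : ℕ) (z : Fin r → Finset (Fin m))
      (f : Fin n → Fin r → ℕ) (s : Fin n → Fin r → Finset (Fin m))
      (t : Fin n → Fin r → Bool)
      (i : Fin n) (f' : Fin r → ℕ) (s' : Fin r → Finset (Fin m)) (t' : Fin r → Bool)
      (Q Q' : Finset (Fin m)),
      0 < B ∧
      -- the groups partition the project set
      (∀ g g' : Fin r, g ≠ g' → Disjoint (z g) (z g')) ∧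
      (Finset.univ.biUnion z = (Finset.univ : Finset (Fin m))) ∧
      -- the truthful votes and the deviation are admissible
      (∀ j g, s j g ⊆ z g) ∧ (∀ j, ∑ g, f j g ≤ B) ∧
      (∀ g, s' g ⊆ z g) ∧ (∑ g, f' g ≤ B) ∧
      -- `Q` is the unique social-welfare maximizer under the truthful profile
      Q.card ≤ B ∧
      (∀ R : Finset (Fin m), R.card ≤ B → R ≠ Q →
        (∑ j, pbpiUtil (f j) (s j) (t j) R) < ∑ j, pbpiUtil (f j) (s j) (t j) Q) ∧
      -- `Q'` is the unique social-welfare maximizer under the deviated profile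
      Q'.card ≤ B ∧
      (∀ R : Finset (Fin m), R.card ≤ B → R ≠ Q' →
        (∑ j, pbpiUtil (Function.update f i f' j) (Function.update s i s' j)
            (Function.update t i t' j) R) <
          ∑ j, pbpiUtil (Function.update f i f' j) (Function.update s i s' j)
            (Function.update t i t' j) Q') ∧
      -- voter `i` strictly benefits (utility computed from `i`'s truthful vote)
      pbpiUtil (f i) (s i) (t i) Q < pbpiUtil (f i) (s i) (t i) Q' := by
  refine ⟨6, 1, 3, 3, fun _ => Finset.univ,
    ![fun _ => 1, fun _ => 3, fun _ => 1],
    ![fun _ => {0, 1, 2}, fun _ => {3, 4, 5}, fun _ => {0}],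
    ![fun _ => false, fun _ => true, fun _ => false],
    0, fun _ => 3, fun _ => {0, 1, 2}, fun _ => false,
    {3, 4, 5}, {0, 1, 2}, ?_, ?_, ?_, ?_, ?_, ?_, ?_, ?_, ?_, ?_, ?_, ?_⟩
  all_goals decide +kernel
end

section
/- PBPI is not strategyproof under unit-cost projects even when only substitution interactions are allowed (all complementarity answers are 0): there exist a finite set of unit-cost projects partitioned into groups, a budget B, a truthful vote profile with t_g^i = 0 for all voters and groups, a voter i, a deviating vote for voter i (also with all complementarity answers 0), a feasible outcome Q maximizing reported social welfare under the truthful profile, and a feasible outcome Q' maximizing reported social welfare under the deviated profile, such that voter i's utility computed from i's truthful vote satisfies u_i(Q') > u_i(Q). -/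
/-!
PBPI is not strategyproof under unit-cost projects even when only substitution
interactions are allowed (all complementarity answers are 0).
-/

open Finset

/-- The overlap utility of a voter with fund allocations `f` and approval sets `s`
(no complementarity) from the outcome `Q`, with unit-cost projects. -/
def overlapUtil {α : Type*} [DecidableEq α] {r : ℕ} (f : Fin r → ℕ)
    (s : Fin r → Finset α) (Q : Finset α) : ℕ :=
  ∑ g, min (f g) ((Q ∩ s g).card)

/-- There exist unit-cost projects partitioned into groups, a budget,
a truthful profile with all complementarity answers 0, a voter `i`, a deviating vote
for `i` (again with no complementarity), a feasible outcome `Q` maximizing reported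
social welfare under the truthful profile, and a feasible outcome `Q'` maximizing
reported social welfare under the deviated profile, such that `u_i(Q') > u_i(Q)`
where `u_i` is computed from `i`'s truthful vote. -/
theorem pbpi_not_strategyproof_substitutes_only :
    ∃ (m r n B : ℕ) (z : Fin r → Finset (Fin m))
      (f : Fin n → Fin r → ℕ) (s : Fin n → Fin r → Finset (Fin m))
      (i : Fin n) (f' : Fin r → ℕ) (s' : Fin r → Finset (Fin m))
      (Q Q' : Finset (Fin m)),
      0 < B ∧
      -- the groups partition the project set
      (∀ g g' : Fin r, g ≠ g' → Disjoint (z g) (z g')) ∧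
      (Finset.univ.biUnion z = (Finset.univ : Finset (Fin m))) ∧
      -- the truthful votes and the deviation are admissible
      (∀ j g, s j g ⊆ z g) ∧ (∀ j, ∑ g, f j g ≤ B) ∧
      (∀ g, s' g ⊆ z g) ∧ (∑ g, f' g ≤ B) ∧
      -- `Q` maximizes reported social welfare among feasible outcomes, truthful profile
      Q.card ≤ B ∧
      (∀ R : Finset (Fin m), R.card ≤ B →
        (∑ j, overlapUtil (f j) (s j) R) ≤ ∑ j, overlapUtil (f j) (s j) Q) ∧
      -- `Q'` maximizes reported social welfare among feasible outcomes, deviated profile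
      Q'.card ≤ B ∧
      (∀ R : Finset (Fin m), R.card ≤ B →
        (∑ j, overlapUtil (Function.update f i f' j) (Function.update s i s' j) R) ≤
          ∑ j, overlapUtil (Function.update f i f' j) (Function.update s i s' j) Q') ∧
      -- voter `i` strictly benefits (utility computed from `i`'s truthful vote)
      overlapUtil (f i) (s i) Q < overlapUtil (f i) (s i) Q' := by
  -- one group `{0,1,2,3}`, budget 2; four voters on the edges of a 4-cycle,
  -- one voter for project 0, and the manipulator (voter 5), who approves only project 1
  -- and pretends to approve also project 3
  refine ⟨4, 1, 6, 2, fun _ => Finset.univ,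
    ![fun _ => 1, fun _ => 1, fun _ => 1, fun _ => 1, fun _ => 1, fun _ => 1],
    ![fun _ => {0, 1}, fun _ => {1, 2}, fun _ => {2, 3}, fun _ => {0, 3},
      fun _ => {0}, fun _ => {1}],
    5, fun _ => 2, fun _ => {1, 3}, {0, 2}, {1, 3}, ?_⟩
  refine ⟨by decide, by decide, by decide, by decide, by decide, by decide, by decide,
    by decide, ?_, by decide, ?_, by decide⟩
  · decide +kernel
  · decide +kernel
end

section
/- The reduction from maximum set coverage to SWM-PB is correct: let A be a finite set, let d_1, …, d_m be subsets of A, and let k ∈ ℕ. Construct a PB instance with one voter per element a ∈ A and m unit-cost projects forming a single non-contradictory group, where voter a sets fund allocation 1, complementarity answer 0, and approval set s^a = { j ∈ [m] : a ∈ d_j }. Then for every set of projects Q ⊆ [m], the social welfare satisfies U(Q) = Σ_{a∈A} min(1, |Q ∩ s^a|) = |⋃_{j∈Q} d_j|; consequently, the maximum social welfare over Q with |Q| ≤ k equals the maximum of |⋃_{j∈Q} d_j| over Q with |Q| ≤ k, and a set Q with |Q| ≤ k maximizes U if and only if it maximizes coverage. -/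
/-!
Correctness of the reduction from maximum set coverage to SWM-PB.
-/

open Finset

/-- Given a finite universal set `A` (the type `β`), subsets
`d 1, …, d m` of it, and `k ∈ ℕ`, build the PB instance with one voter per element
`a`, unit costs, one non-contradictory group, fund allocation `1`, complementarity
answer `0`, and approval set `s a = {j : a ∈ d j}`. Then the social welfare satisfies
`U Q = Σ_a min 1 |Q ∩ s a| = |⋃_{j ∈ Q} d j|` for every `Q`; consequently the maximum
social welfare over `|Q| ≤ k` equals the maximum coverage over `|Q| ≤ k`, and `Q`
maximizes social welfare iff it maximizes coverage. -/
theorem msc_reduction_correct {β : Type*} [Fintype β] [DecidableEq β]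
    (m k : ℕ) (d : Fin m → Finset β) :
    (∀ Q : Finset (Fin m),
        (∑ a : β, min 1 ((Q ∩ Finset.univ.filter fun j => a ∈ d j).card)) =
          (Q.biUnion d).card) ∧
      ((Finset.univ.powerset.filter fun Q : Finset (Fin m) => Q.card ≤ k).sup
          (fun Q => ∑ a : β, min 1 ((Q ∩ Finset.univ.filter fun j => a ∈ d j).card)) =
        (Finset.univ.powerset.filter fun Q : Finset (Fin m) => Q.card ≤ k).sup
          (fun Q => (Q.biUnion d).card)) ∧
      (∀ Q : Finset (Fin m), Q.card ≤ k →
        ((∀ R : Finset (Fin m), R.card ≤ k →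
            (∑ a : β, min 1 ((R ∩ Finset.univ.filter fun j => a ∈ d j).card)) ≤
              ∑ a : β, min 1 ((Q ∩ Finset.univ.filter fun j => a ∈ d j).card)) ↔
          (∀ R : Finset (Fin m), R.card ≤ k →
            (R.biUnion d).card ≤ (Q.biUnion d).card))) := by
  have key : ∀ Q : Finset (Fin m),
      (∑ a : β, min 1 ((Q ∩ Finset.univ.filter fun j => a ∈ d j).card)) =
        (Q.biUnion d).card := by
    intro Q
    have h : ∀ a : β, min 1 ((Q ∩ Finset.univ.filter fun j => a ∈ d j).card) =
        if a ∈ Q.biUnion d then 1 else 0 := by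
      intro a
      split_ifs with ha
      · obtain ⟨j, hj, haj⟩ := Finset.mem_biUnion.mp ha
        have hpos : 0 < (Q ∩ Finset.univ.filter fun j => a ∈ d j).card :=
          Finset.card_pos.mpr ⟨j, by simp [hj, haj]⟩
        exact min_eq_left hpos
      · have hempty : (Q ∩ Finset.univ.filter fun j => a ∈ d j) = ∅ := by
          apply Finset.eq_empty_of_forall_notMem
          intro j hj
          rw [Finset.mem_inter, Finset.mem_filter] at hj
          exact ha (Finset.mem_biUnion.mpr ⟨j, hj.1, hj.2.2⟩)
        rw [hempty]
        rfl
    rw [Finset.sum_congr rfl fun a _ => h a]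
    simp only [Finset.sum_boole, Finset.filter_univ_mem, Nat.cast_id]
  refine ⟨key, Finset.sup_congr rfl fun Q _ => key Q, fun Q _ => ?_⟩
  simp only [key]
end

section
/- In a special vote profile, replacing a funded lower-ranked substitute project by a higher-ranked one weakly increases social welfare: assume unit-cost projects, no complementarity answers, and a vote profile that is special (Definition 4). Let g be a substitutes group, let λ be one of its subgroups with strict total order ≻, and let p_h, p_l ∈ λ with p_h ≻ p_l. Then for every outcome Q ⊆ P with p_l ∈ Q and p_h ∉ Q, the social welfare satisfies U((Q \ {p_l}) ∪ {p_h}) ≥ U(Q). -/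
/-!
In a special vote profile, replacing a funded lower-ranked substitute project by a
higher-ranked one of the same subgroup weakly increases social welfare.
-/

open Finset

/-- Unit-cost projects, no complementarity, special vote profile:
`g` is a substitutes group, partitioned into subgroups `sub a` with strict total
orders (encoded by ranks `ord`, injective on each subgroup, smaller rank = ranked
higher); every voter's approval set in `g` lies in a single subgroup and is upward
closed for the rank. If `ph` and `pl` lie in the same subgroup with `ph` ranked above
`pl` (`ord ph < ord pl`), then for every outcome `Q` with `pl ∈ Q` and `ph ∉ Q`,
replacing `pl` by `ph` weakly increases social welfare:
`U Q ≤ U ((Q \ {pl}) ∪ {ph})`. -/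
theorem swap_higher_ranked_substitute
    {α : Type*} [Fintype α] [DecidableEq α] (r n : ℕ)
    (z : Fin r → Finset α)
    (hzdis : ∀ g g' : Fin r, g ≠ g' → Disjoint (z g) (z g'))
    (hzcov : Finset.univ.biUnion z = (Finset.univ : Finset α))
    (f : Fin n → Fin r → ℕ) (s : Fin n → Fin r → Finset α)
    (hsz : ∀ i g, s i g ⊆ z g)
    (g : Fin r) (k : ℕ) (sub : Fin k → Finset α) (ord : α → ℕ)
    (hsubdis : ∀ a b : Fin k, a ≠ b → Disjoint (sub a) (sub b))
    (hsubcov : Finset.univ.biUnion sub = z g)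
    (hinj : ∀ a : Fin k, Set.InjOn ord (sub a : Set α))
    (hvoters : ∀ i : Fin n, ∃ a : Fin k, s i g ⊆ sub a ∧
      ∀ p ∈ s i g, ∀ q ∈ sub a, ord q < ord p → q ∈ s i g)
    (a : Fin k) (ph pl : α) (hph : ph ∈ sub a) (hpl : pl ∈ sub a)
    (hrank : ord ph < ord pl)
    (Q : Finset α) (hplQ : pl ∈ Q) (hphQ : ph ∉ Q) :
    (∑ i, overlapUtil (f i) (s i) Q) ≤
      ∑ i, overlapUtil (f i) (s i) (insert ph (Q.erase pl)) := by
  have key : ∀ i g', pl ∈ s i g' → ph ∈ s i g' := by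
    intro i g' h
    have hz : pl ∈ z g := by
      rw [← hsubcov]
      exact Finset.mem_biUnion.2 ⟨a, Finset.mem_univ _, hpl⟩
    have hg : g' = g := by
      by_contra hne
      exact Finset.disjoint_left.1 (hzdis g' g hne) (hsz i g' h) hz
    subst hg
    obtain ⟨b, hb, hup⟩ := hvoters i
    have hab : b = a := by
      by_contra hne
      exact Finset.disjoint_left.1 (hsubdis b a hne) (hb h) hpl
    subst hab
    exact hup pl h ph hph hrank
  refine Finset.sum_le_sum fun i _ => ?_
  unfold overlapUtil
  refine Finset.sum_le_sum fun g' _ => min_le_min le_rfl ?_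
  by_cases h : pl ∈ s i g'
  · have h2 := key i g' h
    rw [Finset.insert_inter_of_mem h2, Finset.erase_inter,
      Finset.card_insert_of_notMem (by simp [hphQ]),
      Finset.card_erase_add_one (Finset.mem_inter.2 ⟨hplQ, h⟩)]
  · apply Finset.card_le_card
    intro x hx
    rw [Finset.mem_inter] at hx ⊢
    refine ⟨Finset.mem_insert_of_mem (Finset.mem_erase.2 ⟨?_, hx.1⟩), hx.2⟩
    rintro rfl
    exact h hx.2
end

section
/- Per-group optimization decomposes over satisfied complementary voters: assume unit-cost projects and a single group g = z_g with budget b. Partition the voters into C = { i : t_g^i = 1 } and S = { i : t_g^i = 0 }. Then the maximum of U(Q) over Q ⊆ z_g with |Q| ≤ b equals the maximum, over subsets C' ⊆ C with |⋃_{i∈C'} s_g^i| ≤ b and over sets Q with ⋃_{i∈C'} s_g^i ⊆ Q ⊆ z_g and |Q| ≤ b, of Σ_{i∈C'} min(f_g^i, |s_g^i|) + Σ_{i∈S} min(f_g^i, |Q ∩ s_g^i|). -/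
/-!
Per-group optimization decomposes over the subset of complementarity voters that get
fully satisfied.
-/

open Finset

/-- Single group `zg` of unit-cost projects, budget `b`; voters with
allocations `f`, approvals `s i ⊆ zg`, and complementarity answers `t`. The maximum
social welfare over `Q ⊆ zg` with `|Q| ≤ b` equals the maximum, over subsets `C'` of
the complementarity voters with `|⋃_{i ∈ C'} s i| ≤ b` and over outcomes `Q` with
`⋃_{i ∈ C'} s i ⊆ Q ⊆ zg`, `|Q| ≤ b`, of
`Σ_{i ∈ C'} min (f i) |s i| + Σ_{i ∈ S} min (f i) |Q ∩ s i|`. -/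
theorem per_group_complementary_decomposition
    {α : Type*} [Fintype α] [DecidableEq α] (n b : ℕ)
    (zg : Finset α) (f : Fin n → ℕ) (s : Fin n → Finset α)
    (hs : ∀ i, s i ⊆ zg) (t : Fin n → Bool) :
    (zg.powerset.filter fun Q => Q.card ≤ b).sup
        (fun Q => ∑ i,
          if t i then (if s i ⊆ Q then min (f i) ((Q ∩ s i).card) else 0)
          else min (f i) ((Q ∩ s i).card)) =
      ((Finset.univ.filter fun i : Fin n => t i = true).powerset.filter
          fun C' => (C'.biUnion s).card ≤ b).sup
        fun C' =>
          (zg.powerset.filter fun Q => C'.biUnion s ⊆ Q ∧ Q.card ≤ b).sup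
            fun Q =>
              (∑ i ∈ C', min (f i) (s i).card) +
                ∑ i ∈ Finset.univ.filter fun i : Fin n => ¬(t i = true),
                  min (f i) ((Q ∩ s i).card) := by
  have key : ∀ Q : Finset α, (∑ i,
          if t i then (if s i ⊆ Q then min (f i) ((Q ∩ s i).card) else 0)
          else min (f i) ((Q ∩ s i).card)) =
      (∑ i ∈ (Finset.univ.filter fun i : Fin n => t i = true).filter (fun i => s i ⊆ Q),
        min (f i) (s i).card) +
        ∑ i ∈ Finset.univ.filter fun i : Fin n => ¬(t i = true),
          min (f i) ((Q ∩ s i).card) := by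
    intro Q
    rw [Finset.sum_ite, Finset.sum_filter (fun i => s i ⊆ Q)]
    congr 1
    refine Finset.sum_congr rfl fun i _ => ?_
    by_cases h : s i ⊆ Q
    · rw [if_pos h, if_pos h, Finset.inter_eq_right.mpr h]
    · rw [if_neg h, if_neg h]
  apply le_antisymm
  · refine Finset.sup_le fun Q hQ => ?_
    rw [Finset.mem_filter, Finset.mem_powerset] at hQ
    rw [key Q]
    have hsub : ((Finset.univ.filter fun i : Fin n => t i = true).filter
        (fun i => s i ⊆ Q)).biUnion s ⊆ Q :=
      Finset.biUnion_subset.mpr fun i hi => (Finset.mem_filter.mp hi).2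
    refine Finset.le_sup_of_le (b := (Finset.univ.filter fun i : Fin n => t i = true).filter
        (fun i => s i ⊆ Q)) ?_ (Finset.le_sup_of_le (b := Q) ?_ le_rfl)
    · rw [Finset.mem_filter, Finset.mem_powerset]
      exact ⟨Finset.filter_subset _ _, (Finset.card_le_card hsub).trans hQ.2⟩
    · rw [Finset.mem_filter, Finset.mem_powerset]
      exact ⟨hQ.1, hsub, hQ.2⟩
  · refine Finset.sup_le fun C' hC => Finset.sup_le fun Q hQ => ?_
    rw [Finset.mem_filter, Finset.mem_powerset] at hC hQ
    refine Finset.le_sup_of_le (b := Q) ?_ ?_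
    · rw [Finset.mem_filter, Finset.mem_powerset]
      exact ⟨hQ.1, hQ.2.2⟩
    · rw [key Q]
      refine Nat.add_le_add_right (Finset.sum_le_sum_of_subset fun i hi => ?_) _
      exact Finset.mem_filter.mpr ⟨hC.1 hi, Finset.biUnion_subset.mp hQ.2.1 i hi⟩
end

section
/- Nested per-group optima extend to unions of groups: assume unit-cost projects and that all complementarity answers are 0 (so every voter's utility u_i(Q) = Σ_g min(f_g^i, |Q ∩ s_g^i|) is submodular). Suppose for each group g there exists a chain Q_g(0) ⊆ Q_g(1) ⊆ … ⊆ Q_g(|z_g|) with |Q_g(b)| = b such that Q_g(b) maximizes U among all size-b subsets of z_g. Then for every set of groups G ⊆ [r] there exists a chain Q_G(0) ⊆ Q_G(1) ⊆ … with |Q_G(b)| = b such that Q_G(b) maximizes U among all size-b subsets of ⋃_{g∈G} z_g. -/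
/-!
Nested per-group optima extend to unions of groups (unit costs, no complementarity).
-/

open Finset

def HasOptChain {α : Type*} [DecidableEq α] (U : Finset α → ℕ) (A : Finset α) : Prop :=
  ∃ Q : ℕ → Finset α, (∀ b, Q b ⊆ A) ∧ (∀ b, Q b ⊆ Q (b + 1)) ∧
    ∀ b ≤ A.card, (Q b).card = b ∧ ∀ R ⊆ A, R.card = b → U R ≤ U (Q b)

lemma chain_concave {α : Type*} [DecidableEq α] (U : Finset α → ℕ)
    (hU : ∀ S T : Finset α, ∀ y, S ⊆ T → y ∉ T → U (insert y T) + U S ≤ U (insert y S) + U T)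
    (A : Finset α) (Q : ℕ → Finset α) (h1 : ∀ b, Q b ⊆ A) (h2 : ∀ b, Q b ⊆ Q (b + 1))
    (h3 : ∀ b ≤ A.card, (Q b).card = b ∧ ∀ R ⊆ A, R.card = b → U R ≤ U (Q b))
    (p q : ℕ) (hpq : p ≤ q) (hq : q + 1 ≤ A.card) :
    U (Q (q + 1)) + U (Q p) ≤ U (Q (p + 1)) + U (Q q) := by
  have hc := (h3 (q + 1) hq).1
  have hc' := (h3 q (by omega)).1
  have hcp := (h3 p (by omega)).1
  have hsub : Q p ⊆ Q q := monotone_nat_of_le_succ (f := Q) h2 hpq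
  obtain ⟨y, hy, hyQ⟩ := Finset.exists_mem_notMem_of_card_lt_card
    (s := Q q) (t := Q (q + 1)) (by omega)
  have hins : insert y (Q q) = Q (q + 1) := by
    apply Finset.eq_of_subset_of_card_le
    · exact Finset.insert_subset hy (h2 q)
    · rw [Finset.card_insert_of_notMem hyQ]; omega
  have hs := hU (Q p) (Q q) y hsub hyQ
  rw [hins] at hs
  have := (h3 (p + 1) (by omega)).2 (insert y (Q p))
    (Finset.insert_subset (h1 _ hy) (h1 p))
    (by rw [Finset.card_insert_of_notMem (fun h => hyQ (hsub h))]; omega)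
  omega

lemma merge_step (a c : ℕ → ℕ) (m k : ℕ)
    (ha : ∀ p q, p ≤ q → q + 1 ≤ m → a (q + 1) + a p ≤ a (p + 1) + a q)
    (hc : ∀ p q, p ≤ q → q + 1 ≤ k → c (q + 1) + c p ≤ c (p + 1) + c q)
    (i j : ℕ) (hi : i ≤ m) (hj : j ≤ k) (hlt : i + j < m + k)
    (hopt : ∀ i' j', i' ≤ m → j' ≤ k → i' + j' = i + j → a i' + c j' ≤ a i + c j) :
    ∃ i₁ j₁, i ≤ i₁ ∧ j ≤ j₁ ∧ i₁ ≤ m ∧ j₁ ≤ k ∧ i₁ + j₁ = i + j + 1 ∧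
      ∀ i' j', i' ≤ m → j' ≤ k → i' + j' = i + j + 1 → a i' + c j' ≤ a i₁ + c j₁ := by
  have hne : ((Finset.range (m + 1) ×ˢ Finset.range (k + 1)).filter
      (fun x => x.1 + x.2 = i + j + 1)).Nonempty := by
    by_cases h : i < m
    · exact ⟨(i + 1, j), by simp; omega⟩
    · exact ⟨(i, j + 1), by simp; omega⟩
  obtain ⟨⟨x, y⟩, hx, hmax⟩ := Finset.exists_max_image _ (fun x => a x.1 + c x.2) hne
  simp only [Finset.mem_filter, Finset.mem_product, Finset.mem_range, Prod.forall] at hx hmax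
  obtain ⟨⟨hxm, hyk⟩, hxy⟩ := hx
  by_cases h : i + 1 ≤ x
  · refine ⟨i + 1, j, by omega, le_rfl, by omega, hj, by omega, fun i' j' h1 h2 h3 => ?_⟩
    have e1 := hmax i' j' ⟨⟨by omega, by omega⟩, h3⟩
    obtain ⟨w, rfl⟩ : ∃ w, x = w + 1 := ⟨x - 1, by omega⟩
    have e2 := ha i w (by omega) (by omega)
    have e3 := hopt w y (by omega) (by omega) (by omega)
    omega
  · refine ⟨i, j + 1, le_rfl, by omega, by omega, by omega, by omega, fun i' j' h1 h2 h3 => ?_⟩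
    have e1 := hmax i' j' ⟨⟨by omega, by omega⟩, h3⟩
    obtain ⟨w, rfl⟩ : ∃ w, y = w + 1 := ⟨y - 1, by omega⟩
    have e2 := hc j w (by omega) (by omega)
    have e3 := hopt x w (by omega) (by omega) (by omega)
    omega

lemma merge_chain (a c : ℕ → ℕ) (m k : ℕ)
    (ha : ∀ p q, p ≤ q → q + 1 ≤ m → a (q + 1) + a p ≤ a (p + 1) + a q)
    (hc : ∀ p q, p ≤ q → q + 1 ≤ k → c (q + 1) + c p ≤ c (p + 1) + c q) :
    ∃ t : ℕ → ℕ × ℕ, (∀ b, (t b).1 ≤ (t (b + 1)).1 ∧ (t b).2 ≤ (t (b + 1)).2) ∧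
      ∀ b, (t b).1 ≤ m ∧ (t b).2 ≤ k ∧ (t b).1 + (t b).2 = min b (m + k) ∧
        ∀ i' j', i' ≤ m → j' ≤ k → i' + j' = (t b).1 + (t b).2 →
          a i' + c j' ≤ a (t b).1 + c (t b).2 := by
  let Good : ℕ → ℕ × ℕ → Prop := fun b t => t.1 ≤ m ∧ t.2 ≤ k ∧ t.1 + t.2 = min b (m + k) ∧
        ∀ i' j', i' ≤ m → j' ≤ k → i' + j' = t.1 + t.2 → a i' + c j' ≤ a t.1 + c t.2
  have step : ∀ b p, ∃ q : ℕ × ℕ, Good b p → Good (b + 1) q ∧ p.1 ≤ q.1 ∧ p.2 ≤ q.2 := by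
    intro b p
    by_cases hg : Good b p
    · obtain ⟨g1, g2, g3, g4⟩ := hg
      by_cases hb : b < m + k
      · obtain ⟨i, j, q1, q2, q3, q4, q5, q6⟩ :=
          merge_step a c m k ha hc p.1 p.2 g1 g2 (by omega) g4
        refine ⟨(i, j), fun _ => ⟨⟨q3, q4, ?_, ?_⟩, q1, q2⟩⟩
        · show i + j = _
          omega
        · intro i' j' h1 h2 h3
          exact q6 i' j' h1 h2 (by simp only at h3; omega)
      · exact ⟨p, fun _ => ⟨⟨g1, g2, by omega, g4⟩, le_rfl, le_rfl⟩⟩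
    · exact ⟨p, fun h => absurd h hg⟩
  choose F hF using step
  let t : ℕ → ℕ × ℕ := fun b => Nat.rec (0, 0) (fun b p => F b p) b
  have hgood : ∀ b, Good b (t b) := by
    intro b
    induction b with
    | zero =>
      refine ⟨Nat.zero_le _, Nat.zero_le _, by simp [t], ?_⟩
      intro i' j' _ _ h
      have h0 : i' = 0 ∧ j' = 0 := by simpa [t] using h
      obtain ⟨rfl, rfl⟩ := h0
      exact le_rfl
    | succ b ih => exact (hF b (t b) ih).1
  exact ⟨t, fun b => (hF b (t b) (hgood b)).2, hgood⟩

lemma HasOptChain.union {α : Type*} [DecidableEq α] (U : Finset α → ℕ)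
    (hU : ∀ S T : Finset α, ∀ y, S ⊆ T → y ∉ T → U (insert y T) + U S ≤ U (insert y S) + U T)
    (A B : Finset α) (hAB : Disjoint A B)
    (hadd : ∀ R ⊆ A, ∀ S ⊆ B, U (R ∪ S) = U R + U S)
    (hA : HasOptChain U A) (hB : HasOptChain U B) : HasOptChain U (A ∪ B) := by
  obtain ⟨P, p1, p2, p3⟩ := hA
  obtain ⟨Q, q1, q2, q3⟩ := hB
  obtain ⟨t, t1, t2⟩ := merge_chain (fun b => U (P b)) (fun b => U (Q b)) A.card B.card
    (chain_concave U hU A P p1 p2 p3) (chain_concave U hU B Q q1 q2 q3)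
  refine ⟨fun b => P (t b).1 ∪ Q (t b).2, fun b => Finset.union_subset_union (p1 _) (q1 _),
    fun b => Finset.union_subset_union (monotone_nat_of_le_succ (f := P) p2 (t1 b).1)
      (monotone_nat_of_le_succ (f := Q) q2 (t1 b).2), ?_⟩
  intro b hb
  rw [Finset.card_union_of_disjoint hAB] at hb
  obtain ⟨g1, g2, g3, g4⟩ := t2 b
  constructor
  · rw [Finset.card_union_of_disjoint (Finset.disjoint_of_subset_left (p1 _)
      (Finset.disjoint_of_subset_right (q1 _) hAB)), (p3 _ g1).1, (q3 _ g2).1]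
    omega
  · intro R hR hRc
    have hReq : R = (R ∩ A) ∪ (R ∩ B) := by
      rw [← Finset.inter_union_distrib_left, Finset.inter_eq_left.2 hR]
    have hcard : R.card = (R ∩ A).card + (R ∩ B).card := by
      conv_lhs => rw [hReq]
      exact Finset.card_union_of_disjoint (Finset.disjoint_of_subset_left
        Finset.inter_subset_right (Finset.disjoint_of_subset_right Finset.inter_subset_right hAB))
    have cA : (R ∩ A).card ≤ A.card := Finset.card_le_card Finset.inter_subset_right
    have cB : (R ∩ B).card ≤ B.card := Finset.card_le_card Finset.inter_subset_right
    have e1 := (p3 _ cA).2 (R ∩ A) Finset.inter_subset_right rfl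
    have e2 := (q3 _ cB).2 (R ∩ B) Finset.inter_subset_right rfl
    have e3 := g4 _ _ cA cB (by omega)
    have e4 := hadd (R ∩ A) Finset.inter_subset_right (R ∩ B) Finset.inter_subset_right
    rw [← hReq] at e4
    have e5 := hadd _ (p1 (t b).1) _ (q1 (t b).2)
    simp only at e3 ⊢
    omega

lemma overlapUtil_submod {α : Type*} [DecidableEq α] {r : ℕ} (f : Fin r → ℕ)
    (s : Fin r → Finset α) (S T : Finset α) (y : α) (hST : S ⊆ T) (hy : y ∉ T) :
    overlapUtil f s (insert y T) + overlapUtil f s S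
      ≤ overlapUtil f s (insert y S) + overlapUtil f s T := by
  unfold overlapUtil
  rw [← Finset.sum_add_distrib, ← Finset.sum_add_distrib]
  refine Finset.sum_le_sum fun g _ => ?_
  have hc : (S ∩ s g).card ≤ (T ∩ s g).card :=
    Finset.card_le_card (Finset.inter_subset_inter_right hST)
  by_cases h : y ∈ s g
  · rw [Finset.insert_inter_of_mem h, Finset.insert_inter_of_mem h,
      Finset.card_insert_of_notMem (fun h' => hy (Finset.mem_inter.1 h').1),
      Finset.card_insert_of_notMem (fun h' => hy (hST (Finset.mem_inter.1 h').1))]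
    omega
  · rw [Finset.insert_inter_of_notMem h, Finset.insert_inter_of_notMem h]
    omega

/-- Unit-cost projects, all complementarity answers 0. If for every
group `g` there is a nested chain `Qg 0 ⊆ Qg 1 ⊆ …` of subsets of `z g`, with
`|Qg b| = b`, such that `Qg b` maximizes social welfare among all size-`b` subsets of
`z g`, then for every set `G` of groups there is a nested chain `QG 0 ⊆ QG 1 ⊆ …` of
subsets of `⋃_{g ∈ G} z g`, with `|QG b| = b`, such that `QG b` maximizes social
welfare among all size-`b` subsets of `⋃_{g ∈ G} z g`. -/
theorem nested_group_optima_extend_to_unions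
    {α : Type*} [Fintype α] [DecidableEq α] (r n : ℕ)
    (z : Fin r → Finset α)
    (hzdis : ∀ g g' : Fin r, g ≠ g' → Disjoint (z g) (z g'))
    (hzcov : Finset.univ.biUnion z = (Finset.univ : Finset α))
    (f : Fin n → Fin r → ℕ) (s : Fin n → Fin r → Finset α)
    (hsz : ∀ i g, s i g ⊆ z g)
    (hchains : ∀ g : Fin r, ∃ Qg : ℕ → Finset α,
      (∀ b, Qg b ⊆ z g) ∧ (∀ b, Qg b ⊆ Qg (b + 1)) ∧
      ∀ b ≤ (z g).card, (Qg b).card = b ∧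
        ∀ R ⊆ z g, R.card = b →
          (∑ i, overlapUtil (f i) (s i) R) ≤ ∑ i, overlapUtil (f i) (s i) (Qg b)) :
    ∀ G : Finset (Fin r), ∃ QG : ℕ → Finset α,
      (∀ b, QG b ⊆ G.biUnion z) ∧ (∀ b, QG b ⊆ QG (b + 1)) ∧
      ∀ b ≤ (G.biUnion z).card, (QG b).card = b ∧
        ∀ R ⊆ G.biUnion z, R.card = b →
          (∑ i, overlapUtil (f i) (s i) R) ≤ ∑ i, overlapUtil (f i) (s i) (QG b) := by
  have hsub : ∀ S T : Finset α, ∀ y, S ⊆ T → y ∉ T →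
      (∑ i, overlapUtil (f i) (s i) (insert y T)) + (∑ i, overlapUtil (f i) (s i) S)
      ≤ (∑ i, overlapUtil (f i) (s i) (insert y S)) + ∑ i, overlapUtil (f i) (s i) T := by
    intro S T y h1 h2
    rw [← Finset.sum_add_distrib, ← Finset.sum_add_distrib]
    exact Finset.sum_le_sum fun i _ => overlapUtil_submod _ _ S T y h1 h2
  intro G
  change HasOptChain (fun R => ∑ i, overlapUtil (f i) (s i) R) (G.biUnion z)
  induction G using Finset.induction_on with
  | empty =>
    refine ⟨fun _ => ∅, by simp, by simp, ?_⟩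
    intro b hb
    have hb0 : b = 0 := by simpa using hb
    subst hb0
    refine ⟨rfl, fun R _ hR => ?_⟩
    rw [Finset.card_eq_zero.1 hR]
  | insert g G hg ih =>
    rw [Finset.biUnion_insert]
    have hdis : Disjoint (z g) (G.biUnion z) := by
      rw [Finset.disjoint_biUnion_right]
      intro h hh
      exact hzdis g h (fun e => hg (e ▸ hh))
    refine HasOptChain.union _ hsub _ _ hdis ?_ (hchains g) ih
    intro R hR S hS
    simp only [overlapUtil]
    rw [← Finset.sum_add_distrib]
    refine Finset.sum_congr rfl fun i _ => ?_
    rw [← Finset.sum_add_distrib]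
    refine Finset.sum_congr rfl fun h _ => ?_
    by_cases e : h = g
    · subst e
      have : S ∩ s i h = ∅ := Finset.disjoint_iff_inter_eq_empty.1
        (Finset.disjoint_of_subset_left hS (Finset.disjoint_of_subset_right (hsz i h) hdis.symm))
      rw [Finset.union_inter_distrib_right, this]
      simp
    · have : R ∩ s i h = ∅ := Finset.disjoint_iff_inter_eq_empty.1
        (Finset.disjoint_of_subset_left hR (Finset.disjoint_of_subset_right (hsz i h)
          (hzdis g h (Ne.symm e))))
      rw [Finset.union_inter_distrib_right, this]
      simp
end
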